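/- For every γ ∈ (0, 3/8) there exists n₀ such that the following holds. Suppose H=(V,E) is a 3-uniform hypergraph on n > n₀ vertices with δ₁(H) ≥ (5/8 + γ)²·C(n,2). Then for every pair of vertices x, y ∈ V the number of 7-tuples absorbing x and y is at least (γn)⁷/8. -/

import Mathlib

open Finset

/-- The `7`-tuple `(v 0, …, v 6)` of distinct vertices absorbs the pair `x, y`:
`{v 0, v 1, v 2}`, `{v 2, v 3, v 4}`, `{v 4, v 5, v 6}` are edges of `H` and
`{v 1, x, v 3}`, `{v 3, y, v 5}` are edges of `H`. -/
def AbsorbsPair {V : Type} [DecidableEq V] (H : Finset (Finset V)) (v : Fin 7 → V)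
    (x y : V) : Prop :=
  Function.Injective v ∧
  ({v 0, v 1, v 2} : Finset V) ∈ H ∧ ({v 2, v 3, v 4} : Finset V) ∈ H ∧
  ({v 4, v 5, v 6} : Finset V) ∈ H ∧
  ({v 1, x, v 3} : Finset V) ∈ H ∧ ({v 3, y, v 5} : Finset V) ∈ H

/-!
In an absorbing tuple put `w = v 3`, `p = v 2`, `q = v 4`. Then `{w, p, q}` is an edge, `{v 1, v 0}`
is an edge of the link of `p` that starts in the common neighbourhood of `x, w`, and `{v 5, v 6}` is
an edge of the link of `q` that starts in the common neighbourhood of `y, w`.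

A set of `3n/8` vertices has at most `25n²/64` ordered pairs in its complement, while every link has
quadratically more than that, so the set touches quadratically many edges of every link. Hence if
`y, w` has codegree at least `3n/8`, there are quadratically many choices for `(v 5, v 6)`, whatever
`q` is. It need not be possible to choose `w` so that `x, w` has large codegree as well. But if, as
we may assume by symmetry, at least as many `w` have codegree `3n/8` with `y` as with `x`, then the
`w` of the former kind touch quadratically many edges of the link of `x`, which provides the pairs
`(w, v 1)`. Finally, any two links have a positive density of cherries `v 0, p, q`, the first edge
in the link of `v 1` and the second in the link of `w`. Tuples with a repeated vertex number only
`O(n⁶)`.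
-/

/-- A finite weighted graph, given by a symmetric matrix of edge weights in `[0, 1]`. Loops may
carry weight. -/
structure IsWeightedGraph {V : Type*} (W : V → V → ℝ) : Prop where
  symm : ∀ a b, W a b = W b a
  nonneg : ∀ a b, 0 ≤ W a b
  le_one : ∀ a b, W a b ≤ 1

/-- The vertices of degree at least `t` in the graph with edge weights `W`. -/
noncomputable def highDegree {V : Type*} [Fintype V] (W : V → V → ℝ) (t : ℝ) : Finset V :=
  {a | t ≤ ∑ b, W a b}

lemma sum_filter_neg_le_sum {ι : Type*} [Fintype ι] (f : ι → ℝ) (s : Finset ι) :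
    ∑ i with f i < 0, f i ≤ ∑ i ∈ s, f i := by
  classical
  rw [sum_filter, ← Fintype.sum_ite_mem s f]
  refine sum_le_sum fun i _ ↦ ?_
  split_ifs <;> linarith

namespace IsWeightedGraph

variable {V : Type*} [Fintype V] {W : V → V → ℝ}

-- The pointwise bound is `1 ≤ f a + f b + (1 - f a) * (1 - f b)`. For the indicator of a set it
-- says that an edge meets the set or lies in its complement.
lemma sum_degree_le_two_mul_add_sq (hW : IsWeightedGraph W) {f : V → ℝ} (hf₀ : ∀ a, 0 ≤ f a)
    (hf₁ : ∀ a, f a ≤ 1) :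
    ∑ a, ∑ b, W a b ≤ 2 * ∑ a, f a * ∑ b, W a b + (Fintype.card V - ∑ a, f a) ^ 2 := by
  have pointwise (a b : V) :
      W a b ≤ f a * W a b + f b * W b a + (1 - f a) * (1 - f b) := by
    have hab : (1 - f a) * (1 - f b) * W a b ≤ (1 - f a) * (1 - f b) :=
      mul_le_of_le_one_right
        (mul_nonneg (sub_nonneg.2 (hf₁ a)) (sub_nonneg.2 (hf₁ b))) (hW.le_one a b)
    have hff : 0 ≤ f a * f b * W a b := mul_nonneg (mul_nonneg (hf₀ a) (hf₀ b)) (hW.nonneg a b)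
    rw [hW.symm b a]
    linarith
  have hswap : ∑ a, ∑ b, f b * W b a = ∑ a, f a * ∑ b, W a b := by
    simp only [mul_sum]
    exact sum_comm
  have hsq : ∑ a, ∑ b, (1 - f a) * (1 - f b) = (Fintype.card V - ∑ a, f a) ^ 2 := by
    rw [← sum_mul_sum, sum_sub_distrib, ← sq]
    simp
  calc ∑ a, ∑ b, W a b
      ≤ ∑ a, ∑ b, (f a * W a b + f b * W b a + (1 - f a) * (1 - f b)) :=
        sum_le_sum fun a _ ↦ sum_le_sum fun b _ ↦ pointwise a b
    _ = 2 * ∑ a, f a * ∑ b, W a b + (Fintype.card V - ∑ a, f a) ^ 2 := by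
        simp only [sum_add_distrib, hswap, hsq, two_mul]
        simp only [mul_sum]

lemma degree_le_card (hW : IsWeightedGraph W) (a : V) : ∑ b, W a b ≤ Fintype.card V := by
  simpa using sum_le_sum fun b (_ : b ∈ univ) ↦ hW.le_one a b

lemma le_sum_degree_mul_degree (hW : IsWeightedGraph W) {W' : V → V → ℝ} (hW' : IsWeightedGraph W')
    {s : ℝ} (hs : s * Fintype.card V ^ 2 ≤ ∑ a, ∑ b, W a b)
    (hs' : s * Fintype.card V ^ 2 ≤ ∑ a, ∑ b, W' a b) :
    (s - (1 - s) ^ 2) / 2 * Fintype.card V ^ 3 ≤ ∑ a, (∑ b, W a b) * ∑ b, W' a b := by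
  rcases isEmpty_or_nonempty V with hV | hV
  · simp
  have hn : (0 : ℝ) < Fintype.card V := by exact_mod_cast Fintype.card_pos
  set n : ℝ := (Fintype.card V : ℝ)
  have hbound := hW.sum_degree_le_two_mul_add_sq
    (f := fun a ↦ (∑ b, W' a b) / n)
    (fun a ↦ div_nonneg (sum_nonneg fun b _ ↦ hW'.nonneg a b) hn.le)
    (fun a ↦ div_le_one_of_le₀ (hW'.degree_le_card a) hn.le)
  have hdensity : s * n ≤ ∑ a, (∑ b, W' a b) / n := by
    rw [← sum_div, le_div_iff₀ hn]
    linarith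
  have hdensity' : ∑ a, (∑ b, W' a b) / n ≤ n := by
    simpa [n] using sum_le_sum fun a (_ : a ∈ univ) ↦
      div_le_one_of_le₀ (hW'.degree_le_card a) hn.le
  have hsq : (n - ∑ a, (∑ b, W' a b) / n) ^ 2 ≤ (n - s * n) ^ 2 :=
    pow_le_pow_left₀ (by linarith) (by linarith) 2
  have hsum : ∑ a, (∑ b, W' a b) / n * ∑ b, W a b = (∑ a, (∑ b, W a b) * ∑ b, W' a b) / n := by
    rw [sum_div]
    exact sum_congr rfl fun a _ ↦ by ring
  have hdiv : (s - (1 - s) ^ 2) / 2 * n ^ 2 ≤ (∑ a, (∑ b, W a b) * ∑ b, W' a b) / n := by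
    rw [hsum] at hbound
    linarith
  rw [le_div_iff₀ hn] at hdiv
  linarith

lemma sum_degree_le_sum_degree_add (hW : IsWeightedGraph W) (A B : Finset V) :
    ∑ a ∈ A, ∑ b, W a b ≤ ∑ b ∈ B, ∑ a, W b a + #A * (Fintype.card V - #B) := by
  classical
  have hinside : ∑ a ∈ A, ∑ b ∈ B, W a b ≤ ∑ b ∈ B, ∑ a, W b a := by
    rw [sum_comm]
    refine sum_le_sum fun b _ ↦ ?_
    simp only [hW.symm _ b]
    exact sum_le_univ_sum_of_nonneg (hW.nonneg b)
  have houtside : ∑ a ∈ A, ∑ b ∈ Bᶜ, W a b ≤ #A * (Fintype.card V - #B) := by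
    have hcard : ((#Bᶜ : ℕ) : ℝ) = Fintype.card V - #B := by
      rw [card_compl, Nat.cast_sub (card_le_univ B)]
    simpa [hcard, mul_sub] using
      sum_le_sum fun a (_ : a ∈ A) ↦ sum_le_sum fun b (_ : b ∈ Bᶜ) ↦ hW.le_one a b
  simp only [← sum_add_sum_compl B (W _), sum_add_distrib] at hinside ⊢
  linarith

lemma sum_degree_le_of_card_le (hW : IsWeightedGraph W) {B : Finset V}
    (hB : #(highDegree W (3 / 8 * Fintype.card V)) ≤ #B) :
    ∑ a, ∑ b, W a b ≤ 25 / 64 * Fintype.card V ^ 2 + 2 * ∑ a ∈ B, ∑ b, W a b := by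
  classical
  set n : ℝ := (Fintype.card V : ℝ)
  set A := highDegree W (3 / 8 * n)
  have hA := hW.sum_degree_le_sum_degree_add A B
  have hA' : ∑ a ∈ Aᶜ, (∑ b, W a b - 3 / 8 * n) ≤ ∑ a ∈ B, (∑ b, W a b - 3 / 8 * n) := by
    simpa [A, highDegree] using sum_filter_neg_le_sum (fun a ↦ ∑ b, W a b - 3 / 8 * n) B
  have hcard : ((#Aᶜ : ℕ) : ℝ) = n - #A := by
    rw [card_compl, Nat.cast_sub (card_le_univ A)]
  simp only [sum_sub_distrib, sum_const, nsmul_eq_mul] at hA'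
  rw [← sum_add_sum_compl A]
  have hAB : (#A : ℝ) ≤ #B := by exact_mod_cast hB
  -- Equality holds when both sets have `n / 8` elements, which is where `25 / 64` comes from.
  have key : #A * (n - #B) + 3 / 8 * n * (n - #A - #B) ≤ 25 / 64 * n ^ 2 := by
    have hA₀ : (0 : ℝ) ≤ #A := by positivity
    have hn₀ : (0 : ℝ) ≤ n := by positivity
    nlinarith [sq_nonneg (#A - n / 8), mul_nonneg hA₀ (sub_nonneg.2 hAB),
      mul_nonneg hn₀ (sub_nonneg.2 hAB)]
  rw [hcard] at hA'
  linarith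

end IsWeightedGraph

/-- A finite weighted `3`-uniform hypergraph: a function of ordered triples that is symmetric under
permutations and takes values in `[0, 1]`. The link of a vertex `v` is the weighted graph `h v`, and
a pair `a, b` has codegree `∑ c, h a b c`. -/
structure IsWeightedHypergraph {V : Type*} (h : V → V → V → ℝ) : Prop where
  link : ∀ v, IsWeightedGraph (h v)
  swap : ∀ a b c, h a b c = h b a c

/-- The total weight of the pairs `(a, c)` such that `{x, w, a}` and `{p, a, c}` are edges. In an
absorbing `7`-tuple `v`, the pair `(v 1, v 0)` extends `x, v 3, v 2` and the pair `(v 5, v 6)`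
extends `y, v 3, v 4` in this way. -/
noncomputable def extensionWeight {V : Type*} [Fintype V] (h : V → V → V → ℝ) (x w p : V) : ℝ :=
  ∑ a, h x w a * ∑ c, h p a c

/-- The weighted number of `7`-tuples satisfying the five edge conditions of `AbsorbsPair`, with
repeated vertices allowed. -/
noncomputable def absorbingWeight {V : Type*} [Fintype V] (h : V → V → V → ℝ) (x y : V) : ℝ :=
  ∑ v : Fin 7 → V, h (v 0) (v 1) (v 2) * h (v 2) (v 3) (v 4) * h (v 4) (v 5) (v 6) *
    h (v 1) x (v 3) * h (v 3) y (v 5)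

/-- The coordinates of a `7`-tuple, listed in the order `3, 2, 4, 5, 6, 1, 0` in which
`absorbingWeight_eq_sum` sums over them. -/
def tupleEquiv (V : Type*) : V × V × V × V × V × V × V ≃ (Fin 7 → V) where
  toFun := fun (w, p, q, b, d, a, c) ↦ ![c, a, p, w, q, b, d]
  invFun v := (v 3, v 2, v 4, v 5, v 6, v 1, v 0)
  left_inv _ := rfl
  right_inv v := by ext i; fin_cases i <;> rfl

namespace IsWeightedHypergraph

variable {V : Type*} [Fintype V] {h : V → V → V → ℝ}

lemma extensionWeight_nonneg (hh : IsWeightedHypergraph h) (x w p : V) :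
    0 ≤ extensionWeight h x w p :=
  sum_nonneg fun a _ ↦ mul_nonneg ((hh.link x).nonneg w a)
    (sum_nonneg fun c _ ↦ (hh.link p).nonneg a c)

lemma sub_sq_le_two_mul_extensionWeight (hh : IsWeightedHypergraph h) (x w p : V) :
    ∑ a, ∑ b, h p a b - (Fintype.card V - ∑ a, h x w a) ^ 2 ≤ 2 * extensionWeight h x w p :=
  sub_le_iff_le_add.2 <|
    (hh.link p).sum_degree_le_two_mul_add_sq ((hh.link x).nonneg w) ((hh.link x).le_one w)

lemma le_sum_codegree_mul_extensionWeight (hh : IsWeightedHypergraph h) {s : ℝ}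
    (hdeg : ∀ v, s * Fintype.card V ^ 2 ≤ ∑ a, ∑ b, h v a b) (x w : V) :
    (s - (1 - s) ^ 2) / 2 * Fintype.card V ^ 3 * ∑ a, h x w a ≤
      ∑ p, (∑ q, h w p q) * extensionWeight h x w p := by
  calc (s - (1 - s) ^ 2) / 2 * Fintype.card V ^ 3 * ∑ a, h x w a
      = ∑ a, h x w a * ((s - (1 - s) ^ 2) / 2 * Fintype.card V ^ 3) := by
        rw [← sum_mul, mul_comm]
    _ ≤ ∑ a, h x w a * ∑ p, (∑ q, h w p q) * ∑ c, h a p c :=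
        sum_le_sum fun a _ ↦ mul_le_mul_of_nonneg_left
          ((hh.link w).le_sum_degree_mul_degree (hh.link a) (hdeg w) (hdeg a))
          ((hh.link x).nonneg w a)
    _ = ∑ p, (∑ q, h w p q) * extensionWeight h x w p := by
        simp only [extensionWeight, mul_sum (s := univ) (f := fun p ↦ _ * ∑ c, h _ p c)]
        rw [sum_comm]
        refine sum_congr rfl fun p _ ↦ sum_congr rfl fun a _ ↦ ?_
        simp only [hh.swap a p]
        ring

lemma absorbingWeight_eq_sum (hh : IsWeightedHypergraph h) (x y : V) :
    absorbingWeight h x y =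
      ∑ w, ∑ p, ∑ q, h w p q * extensionWeight h x w p * extensionWeight h y w q := by
  have summand (w p q b d a c : V) :
      h c a p * h p w q * h q b d * h a x w * h w y b =
        h w p q * (h x w a * h p a c) * (h y w b * h q b d) := by
    rw [(hh.link c).symm a p, hh.swap c p a, (hh.link p).symm c a, hh.swap p w q, hh.swap a x w,
      (hh.link x).symm a w, hh.swap w y b]
    ring
  rw [absorbingWeight, ← (tupleEquiv V).sum_comp]
  simp only [Fintype.sum_prod_type, extensionWeight, mul_sum, sum_mul]
  exact sum_congr rfl fun w _ ↦ sum_congr rfl fun p _ ↦ sum_congr rfl fun q _ ↦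
    sum_congr rfl fun b _ ↦ sum_congr rfl fun d _ ↦ sum_congr rfl fun a _ ↦
      sum_congr rfl fun c _ ↦ summand w p q b d a c

lemma absorbingWeight_comm (hh : IsWeightedHypergraph h) (x y : V) :
    absorbingWeight h x y = absorbingWeight h y x := by
  rw [hh.absorbingWeight_eq_sum, hh.absorbingWeight_eq_sum]
  refine sum_congr rfl fun w _ ↦ ?_
  rw [sum_comm]
  refine sum_congr rfl fun p _ ↦ sum_congr rfl fun q _ ↦ ?_
  rw [(hh.link w).symm q p]
  ring

lemma mul_sum_codegree_le_absorbingWeight (hh : IsWeightedHypergraph h) {s c : ℝ}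
    (hdeg : ∀ v, s * Fintype.card V ^ 2 ≤ ∑ a, ∑ b, h v a b) (hc : 0 ≤ c)
    {x y : V} {B : Finset V} (hB : ∀ w ∈ B, ∀ q, c ≤ extensionWeight h y w q) :
    c * ((s - (1 - s) ^ 2) / 2 * Fintype.card V ^ 3) * ∑ w ∈ B, ∑ a, h x w a ≤
      absorbingWeight h x y := by
  have hterm_nonneg (w p q : V) : 0 ≤ h w p q * extensionWeight h x w p :=
    mul_nonneg ((hh.link w).nonneg p q) (hh.extensionWeight_nonneg x w p)
  calc c * ((s - (1 - s) ^ 2) / 2 * Fintype.card V ^ 3) * ∑ w ∈ B, ∑ a, h x w a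
      = ∑ w ∈ B, c * ((s - (1 - s) ^ 2) / 2 * Fintype.card V ^ 3 * ∑ a, h x w a) := by
        rw [mul_assoc, mul_sum, mul_sum]
    _ ≤ ∑ w ∈ B, c * ∑ p, (∑ q, h w p q) * extensionWeight h x w p :=
        sum_le_sum fun w _ ↦
          mul_le_mul_of_nonneg_left (hh.le_sum_codegree_mul_extensionWeight hdeg x w) hc
    _ = ∑ w ∈ B, ∑ p, ∑ q, h w p q * extensionWeight h x w p * c := by
        simp only [sum_mul, mul_comm c]
    _ ≤ ∑ w ∈ B, ∑ p, ∑ q, h w p q * extensionWeight h x w p * extensionWeight h y w q :=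
        sum_le_sum fun w hw ↦ sum_le_sum fun p _ ↦ sum_le_sum fun q _ ↦
          mul_le_mul_of_nonneg_left (hB w hw q) (hterm_nonneg w p q)
    _ ≤ absorbingWeight h x y := by
        rw [hh.absorbingWeight_eq_sum]
        exact sum_le_univ_sum_of_nonneg fun w ↦ sum_nonneg fun p _ ↦ sum_nonneg fun q _ ↦
          mul_nonneg (hterm_nonneg w p q) (hh.extensionWeight_nonneg y w q)

theorem le_absorbingWeight (hh : IsWeightedHypergraph h) {ε : ℝ} (hε : 0 ≤ ε)
    (hdeg : ∀ v, (25 / 64 + 2 * ε) * Fintype.card V ^ 2 ≤ ∑ a, ∑ b, h v a b) (x y : V) :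
    79 / 8192 * ε ^ 2 * Fintype.card V ^ 7 ≤ absorbingWeight h x y := by
  set n : ℝ := (Fintype.card V : ℝ)
  wlog hxy : #(highDegree (h x) (3 / 8 * n)) ≤ #(highDegree (h y) (3 / 8 * n)) generalizing x y
  · rw [hh.absorbingWeight_comm]
    exact this y x (le_of_not_ge hxy)
  have hdeg' (v : V) : 25 / 64 * n ^ 2 ≤ ∑ a, ∑ b, h v a b :=
    (by gcongr; linarith : 25 / 64 * n ^ 2 ≤ (25 / 64 + 2 * ε) * n ^ 2).trans (hdeg v)
  have hcodegree : ε * n ^ 2 ≤ ∑ w ∈ highDegree (h y) (3 / 8 * n), ∑ a, h x w a := by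
    linarith [(hh.link x).sum_degree_le_of_card_le hxy, hdeg x]
  have hextension : ∀ w ∈ highDegree (h y) (3 / 8 * n), ∀ q,
      ε * n ^ 2 ≤ extensionWeight h y w q := by
    intro w hw q
    have hw' : 3 / 8 * n ≤ ∑ b, h y w b := by simpa [highDegree] using hw
    have hsq : (n - ∑ b, h y w b) ^ 2 ≤ (5 / 8 * n) ^ 2 :=
      pow_le_pow_left₀ (sub_nonneg.2 ((hh.link y).degree_le_card w)) (by linarith) 2
    linarith [hh.sub_sq_le_two_mul_extensionWeight y w q, hdeg q]
  calc 79 / 8192 * ε ^ 2 * n ^ 7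
      = ε * n ^ 2 * ((25 / 64 - (1 - 25 / 64) ^ 2) / 2 * n ^ 3) * (ε * n ^ 2) := by ring
    _ ≤ ε * n ^ 2 * ((25 / 64 - (1 - 25 / 64) ^ 2) / 2 * n ^ 3) *
          ∑ w ∈ highDegree (h y) (3 / 8 * n), ∑ a, h x w a :=
        mul_le_mul_of_nonneg_left hcodegree (by norm_num; positivity)
    _ ≤ absorbingWeight h x y :=
        hh.mul_sum_codegree_le_absorbingWeight hdeg' (by positivity) hextension

end IsWeightedHypergraph

/-- The edge set `H` as a weighted hypergraph: the weight of `(a, b, c)` is `1` if `{a, b, c}` is an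
edge and `0` otherwise. -/
def edgeWeight {V : Type*} [DecidableEq V] (H : Finset (Finset V)) (a b c : V) : ℝ :=
  if {a, b, c} ∈ H then 1 else 0

lemma isWeightedHypergraph_edgeWeight {V : Type*} [DecidableEq V] (H : Finset (Finset V)) :
    IsWeightedHypergraph (edgeWeight H) where
  link v :=
    { symm a b := by rw [edgeWeight, pair_comm, edgeWeight]
      nonneg a b := by unfold edgeWeight; positivity
      le_one a b := by unfold edgeWeight; split_ifs <;> norm_num }
  swap a b c := by rw [edgeWeight, insert_comm, edgeWeight]

lemma two_mul_degree_le_card_pairs {V : Type*} [Fintype V] [DecidableEq V]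
    {H : Finset (Finset V)} (hH : ∀ e ∈ H, #e = 3) (v : V) :
    2 * #{e ∈ H | v ∈ e} ≤ #{p : V × V | {v, p.1, p.2} ∈ H} := by
  rw [mul_comm, ← mul_one #{p : V × V | _}]
  refine card_mul_le_card_mul (fun e p ↦ {v, p.1, p.2} = e) (fun e he ↦ ?_) fun p _ ↦ ?_
  · obtain ⟨heH, hve⟩ := mem_filter.1 he
    have hcard : #(e.erase v) = 2 := by rw [card_erase_of_mem hve, hH e heH]
    calc 2 = #(e.erase v).offDiag := by rw [offDiag_card, hcard]
      _ ≤ _ := card_le_card fun p hp ↦ ?_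
    obtain ⟨h1, h2, hne⟩ := mem_offDiag.1 hp
    have hpair : {p.1, p.2} = e.erase v :=
      eq_of_subset_of_card_le (by simp [insert_subset_iff, h1, h2]) (by rw [hcard, card_pair hne])
    have hedge : {v, p.1, p.2} = e := by rw [hpair, insert_erase hve]
    simp [bipartiteAbove, hedge, heH]
  · exact card_le_one.2 (by simp +contextual [bipartiteBelow])

lemma two_mul_degree_le_sum_edgeWeight {V : Type*} [Fintype V] [DecidableEq V]
    {H : Finset (Finset V)} (hH : ∀ e ∈ H, #e = 3) (v : V) :
    2 * (#{e ∈ H | v ∈ e} : ℝ) ≤ ∑ a, ∑ b, edgeWeight H v a b := by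
  simp only [edgeWeight]
  rw [← Fintype.sum_prod_type' fun a b ↦ if {v, a, b} ∈ H then (1 : ℝ) else 0, sum_boole]
  exact_mod_cast two_mul_degree_le_card_pairs hH v

lemma le_sum_edgeWeight_of_le_degree {V : Type*} [Fintype V] [DecidableEq V]
    {H : Finset (Finset V)} (hH : ∀ e ∈ H, #e = 3) {γ : ℝ} (hγ₀ : 0 ≤ γ) (hγ₁ : γ ≤ 3 / 8)
    (hn : 1 ≤ γ ^ 2 * Fintype.card V) {v : V}
    (hdeg : (5 / 8 + γ) ^ 2 * ((Fintype.card V).choose 2 : ℝ) ≤ #{e ∈ H | v ∈ e}) :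
    (25 / 64 + 2 * (5 / 8 * γ)) * Fintype.card V ^ 2 ≤ ∑ a, ∑ b, edgeWeight H v a b := by
  have hcoeff : (5 / 8 + γ) ^ 2 ≤ 1 := pow_le_one₀ (by linarith) (by linarith)
  have hdiag : (5 / 8 + γ) ^ 2 * (Fintype.card V : ℝ) ≤ γ ^ 2 * Fintype.card V * Fintype.card V :=
    mul_le_mul_of_nonneg_right (hcoeff.trans hn) (Nat.cast_nonneg _)
  rw [Nat.cast_choose_two] at hdeg
  linarith [two_mul_degree_le_sum_edgeWeight hH v]

lemma pow_le_descFactorial_add (n k : ℕ) :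
    n ^ (k + 1) ≤ n.descFactorial (k + 1) + (k + 1).choose 2 * n ^ k := by
  induction k with
  | zero => simp
  | succ k ih =>
    have hstep : n * n.descFactorial (k + 1) ≤
        n.descFactorial (k + 2) + (k + 1) * n ^ (k + 1) := by
      rw [n.descFactorial_succ (k + 1)]
      calc n * n.descFactorial (k + 1)
          ≤ (n - (k + 1) + (k + 1)) * n.descFactorial (k + 1) :=
            Nat.mul_le_mul_right _ le_tsub_add
        _ ≤ (n - (k + 1)) * n.descFactorial (k + 1) + (k + 1) * n ^ (k + 1) := by
            rw [add_mul]
            gcongr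
            exact n.descFactorial_le_pow _
    calc n ^ (k + 2) = n * n ^ (k + 1) := pow_succ' n (k + 1)
      _ ≤ n * (n.descFactorial (k + 1) + (k + 1).choose 2 * n ^ k) := Nat.mul_le_mul_left n ih
      _ ≤ n.descFactorial (k + 2) + (k + 2).choose 2 * n ^ (k + 1) := by
          rw [Nat.choose_succ_succ' (k + 1) 1, Nat.choose_one_right]
          rw [pow_succ'] at hstep ⊢
          linarith

lemma ncard_not_injective_le (V : Type*) [Fintype V] (k : ℕ) :
    {v : Fin (k + 1) → V | ¬ Function.Injective v}.ncard ≤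
      (k + 1).choose 2 * Fintype.card V ^ k := by
  classical
  have hinj : {v : Fin (k + 1) → V | Function.Injective v}.ncard =
      (Fintype.card V).descFactorial (k + 1) := by
    rw [← Nat.card_coe_set_eq]
    exact (Nat.card_congr (Equiv.subtypeInjectiveEquivEmbedding _ V)).trans (by simp)
  have hadd := Set.ncard_add_ncard_compl {v : Fin (k + 1) → V | Function.Injective v}
  have hpow := pow_le_descFactorial_add (Fintype.card V) k
  simp only [hinj, Set.compl_ofPred, Nat.card_eq_fintype_card, Fintype.card_pi_const] at hadd
  lia

lemma absorbingWeight_le_ncard_add {V : Type} [Fintype V] [DecidableEq V] (H : Finset (Finset V))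
    (x y : V) :
    absorbingWeight (edgeWeight H) x y ≤
      {v | AbsorbsPair H v x y}.ncard + 21 * (Fintype.card V : ℝ) ^ 6 := by
  set G : Set (Fin 7 → V) := {v | {v 0, v 1, v 2} ∈ H ∧ {v 2, v 3, v 4} ∈ H ∧
    {v 4, v 5, v 6} ∈ H ∧ {v 1, x, v 3} ∈ H ∧ {v 3, y, v 5} ∈ H} with hG
  have hweight : absorbingWeight (edgeWeight H) x y = G.ncard := by
    simp only [absorbingWeight, edgeWeight, mul_ite, mul_one, mul_zero, ← ite_and]
    rw [sum_boole, hG, Set.ncard_eq_toFinset_card', Set.toFinset_ofPred]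
    congr 3
    ext
    tauto
  have hsubset : G ⊆ {v | AbsorbsPair H v x y} ∪ {v | ¬ Function.Injective v} := fun v hv ↦
    (em (Function.Injective v)).imp (⟨·, hv⟩) id
  have hcard : G.ncard ≤ {v | AbsorbsPair H v x y}.ncard + 21 * Fintype.card V ^ 6 :=
    calc G.ncard ≤ ({v | AbsorbsPair H v x y} ∪ {v | ¬ Function.Injective v}).ncard :=
          Set.ncard_le_ncard hsubset
      _ ≤ {v | AbsorbsPair H v x y}.ncard + {v : Fin 7 → V | ¬ Function.Injective v}.ncard :=
          Set.ncard_union_le _ _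
      _ ≤ {v | AbsorbsPair H v x y}.ncard + 21 * Fintype.card V ^ 6 := by
          gcongr
          exact ncard_not_injective_le V 6
  rw [hweight]
  exact_mod_cast hcard

lemma pow_seven_add_le {γ n : ℝ} (hγ₀ : 0 ≤ γ) (hγ₁ : γ ≤ 3 / 8)
    (hn : 10000 ≤ γ ^ 2 * n) :
    (γ * n) ^ 7 / 8 + 21 * n ^ 6 ≤ 79 / 8192 * (5 / 8 * γ) ^ 2 * n ^ 7 := by
  have hγ : γ ^ 5 ≤ (3 / 8) ^ 5 := pow_le_pow_left₀ hγ₀ hγ₁ 5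
  have hn₀ : 0 < n := pos_of_mul_pos_right (by linarith) (sq_nonneg γ)
  have hmain : γ ^ 2 * n ^ 7 * γ ^ 5 ≤ γ ^ 2 * n ^ 7 * (3 / 8) ^ 5 := by gcongr
  have herror : 10000 * n ^ 6 ≤ γ ^ 2 * n * n ^ 6 := by gcongr
  linarith [pow_pos hn₀ 6]

theorem counting_absorbing_tuples (γ : ℝ) (hγ0 : 0 < γ) (hγ1 : γ < 3 / 8) :
    ∃ n₀ : ℕ, ∀ (V : Type) [Fintype V] [DecidableEq V], ∀ (H : Finset (Finset V)) (n : ℕ),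
      Fintype.card V = n → n₀ < n →
      (∀ e ∈ H, e.card = 3) →
      (∀ v : V, (5 / 8 + γ) ^ 2 * (n.choose 2 : ℝ) ≤
        ((H.filter (fun e => v ∈ e)).card : ℝ)) →
      ∀ x y : V,
        (γ * n) ^ 7 / 8 ≤ (({v : Fin 7 → V | AbsorbsPair H v x y}).ncard : ℝ) := by
  obtain ⟨n₀, hn₀⟩ := exists_nat_gt (10000 / γ ^ 2)
  refine ⟨n₀, ?_⟩
  rintro V _ _ H n rfl hn hH hdeg x y
  have hγn : 10000 ≤ γ ^ 2 * (Fintype.card V : ℝ) :=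
    (div_le_iff₀' (by positivity)).1 (hn₀.le.trans (by exact_mod_cast hn.le))
  have hlink (v : V) :=
    le_sum_edgeWeight_of_le_degree hH hγ0.le hγ1.le (le_trans (by norm_num) hγn) (hdeg v)
  have hweight := (isWeightedHypergraph_edgeWeight H).le_absorbingWeight (by positivity) hlink x y
  linarith [pow_seven_add_le hγ0.le hγ1.le hγn, absorbingWeight_le_ncard_add H x y]
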